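/- For all complex k, the double integral ∫₀^∞ ∫₀^∞ e^{-x} E_{1/4}(-u) (log(i u x^{-1/4}))^k / (u^{1/2} x^{1/8}) du dx equals i^k 2^{2k+1} π^{k+1} (ζ(-k, 3/8) - ζ(-k, 7/8)), where ζ(s,v) is the Hurwitz zeta function. -/

import Mathlib

open MeasureTheory Real Set Complex

/-- The Mittag-Leffler function `E_b(z) = ∑_{n=0}^∞ z^n / Γ(b n + 1)`. -/
noncomputable def mittagLeffler (b z : ℂ) : ℂ :=
  ∑' n : ℕ, z ^ n / Complex.Gamma (b * n + 1)

/-!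
The substitution `u = x^(1/4) t` turns the logarithm into `log(it)`, which no longer involves `x`,
and after Fubini leaves the Laplace-type integral `∫₀^∞ e^(-x) E_{1/4}(-x^(1/4) t) dx`. More
generally, for `ω^n = 1` and `ω ≠ 1`, grouping the series of `E_{1/n}(ωy)` by residues mod `n`
expresses it through the functions `e^(y^n) Q(j/n, y^n)`, with `Q` the regularized upper incomplete
Gamma function; their Laplace transforms are elementary and sum to
`∫₀^∞ e^(-x) E_{1/n}(ω x^(1/n) t) dx = 1 / (1 - ωt)`.

For `n = 4` and `ω = -1` it remains to evaluate `∫₀^∞ log(it)^k t^(-1/2) / (1 + t) dt`. For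
`Re k < -1` one writes `log(it)^k` as a Gamma integral over `w`; the `t`-integral is then given by
the reflection formula, and what is left is the Mellin transform of
`e^(-3πw/2) / (1 + e^(-2πw))`, whose geometric expansion is an alternating Dirichlet series, that
is, a difference of two Hurwitz zeta values. Both sides are entire in `k`, so they
agree for every `k`.
-/

open Filter Topology

/-! ### Parametric, Gamma and Beta integrals -/

theorem differentiableAt_integral_cexp_mul {α : Type*} [MeasurableSpace α] {μ : Measure α}
    {h g : α → ℂ} {z₀ : ℂ} {ε : ℝ} (hε : 0 < ε) (hh : AEStronglyMeasurable h μ)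
    (hg : AEStronglyMeasurable g μ)
    (hint : Integrable (fun x ↦ Real.exp (ε * ‖h x‖) * ‖cexp (h x * z₀) * g x‖) μ) :
    DifferentiableAt ℂ (fun z ↦ ∫ x, cexp (h x * z) * g x ∂μ) z₀ := by
  have hmeas (z : ℂ) : AEStronglyMeasurable (fun x ↦ cexp (h x * z) * g x) μ :=
    (Complex.continuous_exp.comp_aestronglyMeasurable (hh.mul_const z)).mul hg
  have hbound : ∀ x, ∀ z ∈ Metric.ball z₀ (ε / 2), ‖cexp (h x * z) * h x * g x‖ ≤
      2 / ε * (Real.exp (ε * ‖h x‖) * ‖cexp (h x * z₀) * g x‖) := by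
    intro x z hz
    have hcexp : ‖cexp (h x * (z - z₀))‖ ≤ Real.exp (ε / 2 * ‖h x‖) := by
      refine (norm_exp_le_exp_norm _).trans (Real.exp_le_exp.2 ?_)
      rw [norm_mul, mul_comm]
      gcongr
      exact (mem_ball_iff_norm.1 hz).le
    have hle : ‖h x‖ ≤ 2 / ε * Real.exp (ε / 2 * ‖h x‖) := by
      rw [← div_le_iff₀' (by positivity), div_div_eq_mul_div, mul_comm, mul_div_right_comm]
      linarith [Real.add_one_le_exp (ε / 2 * ‖h x‖)]
    calc ‖cexp (h x * z) * h x * g x‖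
        = ‖cexp (h x * (z - z₀))‖ * ‖h x‖ * ‖cexp (h x * z₀) * g x‖ := by
          rw [show h x * z = h x * (z - z₀) + h x * z₀ by ring, Complex.exp_add]
          simp only [norm_mul]
          ring
      _ ≤ Real.exp (ε / 2 * ‖h x‖) * (2 / ε * Real.exp (ε / 2 * ‖h x‖)) *
            ‖cexp (h x * z₀) * g x‖ := by gcongr
      _ = 2 / ε * (Real.exp (ε * ‖h x‖) * ‖cexp (h x * z₀) * g x‖) := by
          rw [show ε * ‖h x‖ = ε / 2 * ‖h x‖ + ε / 2 * ‖h x‖ by ring, Real.exp_add]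
          ring
  refine (hasDerivAt_integral_of_dominated_loc_of_deriv_le
    (F' := fun z x ↦ cexp (h x * z) * h x * g x) (Metric.ball_mem_nhds z₀ (half_pos hε))
    (.of_forall hmeas) (hint.mono' (hmeas z₀) (.of_forall fun x ↦ ?_)) ?_
    (.of_forall hbound) (hint.const_mul _)
    (.of_forall fun x z _ ↦ ?_)).2.differentiableAt
  · exact le_mul_of_one_le_left (norm_nonneg _) (Real.one_le_exp (by positivity))
  · exact ((Complex.continuous_exp.comp_aestronglyMeasurable (hh.mul_const z₀)).mul hh).mul hg
  · simpa using! (((hasDerivAt_id z).const_mul (h x)).cexp).mul_const (g x)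

theorem integrableOn_rpow_sub_one_mul_exp_neg_mul {s c : ℝ} (hs : 0 < s) (hc : 0 < c) :
    IntegrableOn (fun w : ℝ ↦ w ^ (s - 1) * Real.exp (-c * w)) (Ioi 0) := by
  simpa using
    integrableOn_rpow_mul_exp_neg_mul_rpow (s := s - 1) (p := 1) (by linarith) one_pos hc

theorem norm_cpow_sub_one_mul_cexp_neg_mul (s r : ℂ) {w : ℝ} (hw : 0 < w) :
    ‖(w : ℂ) ^ (s - 1) * cexp (-(r * w))‖ = w ^ (s.re - 1) * Real.exp (-r.re * w) := by
  rw [norm_mul, norm_cpow_eq_rpow_re_of_pos hw, Complex.norm_exp]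
  simp

theorem differentiableAt_integral_cpow_mul_cexp_neg_mul_Ioi {s r : ℂ} (hs : 0 < s.re)
    (hr : 0 < r.re) :
    DifferentiableAt ℂ (fun r : ℂ ↦ ∫ w : ℝ in Ioi 0, (w : ℂ) ^ (s - 1) * cexp (-(r * w))) r := by
  have hint : IntegrableOn (fun w : ℝ ↦ Real.exp (r.re / 2 * ‖-(w : ℂ)‖) *
      ‖cexp (-(w : ℂ) * r) * (w : ℂ) ^ (s - 1)‖) (Ioi 0) := by
    refine (integrableOn_rpow_sub_one_mul_exp_neg_mul hs (half_pos hr)).congr_fun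
      (fun w hw ↦ ?_) measurableSet_Ioi
    rw [mul_comm (cexp _), show -(w : ℂ) * r = -(r * w) by ring,
      norm_cpow_sub_one_mul_cexp_neg_mul s r hw, norm_neg, norm_real, norm_of_nonneg hw.out.le,
      mul_left_comm, ← Real.exp_add]
    ring_nf
  simpa only [neg_mul, mul_neg, mul_comm] using differentiableAt_integral_cexp_mul (half_pos hr)
    (by fun_prop) (Measurable.aestronglyMeasurable (by fun_prop)) hint

theorem integral_cpow_mul_cexp_neg_mul_Ioi {s r : ℂ} (hs : 0 < s.re) (hr : 0 < r.re) :
    ∫ w : ℝ in Ioi 0, (w : ℂ) ^ (s - 1) * cexp (-(r * w)) = r ^ (-s) * Complex.Gamma s := by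
  have hopen : IsOpen {z : ℂ | 0 < z.re} := isOpen_lt continuous_const continuous_re
  have hleft : DifferentiableOn ℂ (fun r : ℂ ↦ ∫ w : ℝ in Ioi 0, (w : ℂ) ^ (s - 1) *
      cexp (-(r * w))) {z | 0 < z.re} := fun z hz ↦
    (differentiableAt_integral_cpow_mul_cexp_neg_mul_Ioi hs hz).differentiableWithinAt
  have hright : DifferentiableOn ℂ (fun r : ℂ ↦ r ^ (-s) * Complex.Gamma s) {z | 0 < z.re} :=
    fun z hz ↦ ((differentiableAt_id.cpow_const (.inl hz)).mul_const _).differentiableWithinAt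
  have hreal : ∀ᶠ x : ℝ in 𝓝[≠] 1, ∫ w : ℝ in Ioi 0, (w : ℂ) ^ (s - 1) *
      cexp (-((x : ℂ) * w)) = (x : ℂ) ^ (-s) * Complex.Gamma s := by
    filter_upwards [eventually_nhdsWithin_of_eventually_nhds (lt_mem_nhds one_pos)] with x hx
    have harg : (x : ℂ).arg ≠ π := by
      rw [arg_ofReal_of_nonneg hx.le]
      exact pi_ne_zero.symm
    rw [Complex.integral_cpow_mul_exp_neg_mul_Ioi hs hx, one_div, inv_cpow _ _ harg, cpow_neg]
  have hnhds : Tendsto ((↑) : ℝ → ℂ) (𝓝[≠] 1) (𝓝[≠] 1) :=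
    ofRealCLM.hasDerivAt.tendsto_nhdsNE (by simp)
  exact (hleft.analyticOnNhd hopen).eqOn_of_preconnected_of_frequently_eq
    (hright.analyticOnNhd hopen) (convex_halfSpace_re_gt 0).isPreconnected (z₀ := 1) (by simp)
    (hnhds.frequently hreal.frequently) hr

theorem image_div_one_add_Ioi : (fun t : ℝ ↦ t / (1 + t)) '' Ioi 0 = Ioo 0 1 := by
  ext x
  constructor
  · rintro ⟨t, ht : 0 < t, rfl⟩
    exact ⟨by positivity, (div_lt_one (by positivity)).2 (by linarith)⟩
  · rintro ⟨hx₀, hx₁⟩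
    have : 1 - x ≠ 0 := by linarith
    refine ⟨x / (1 - x), div_pos hx₀ (by linarith), ?_⟩
    field_simp
    ring

theorem injOn_div_one_add : InjOn (fun t : ℝ ↦ t / (1 + t)) (Ioi 0) := by
  intro a (ha : 0 < a) b (hb : 0 < b) hab
  rw [div_eq_div_iff (by linarith) (by linarith)] at hab
  linarith

theorem betaIntegral_eq_integral_Ioi (u v : ℂ) :
    betaIntegral u v = ∫ t : ℝ in Ioi 0, (t : ℂ) ^ (u - 1) / (1 + t : ℂ) ^ (u + v) := by
  have hderiv : ∀ t ∈ Ioi (0 : ℝ),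
      HasDerivWithinAt (fun t : ℝ ↦ t / (1 + t)) (1 / (1 + t) ^ 2) (Ioi 0) t := by
    intro t (ht : 0 < t)
    convert! ((hasDerivAt_id t).div ((hasDerivAt_id t).const_add 1)
      (by simp only [id]; positivity)).hasDerivWithinAt using 1
    simp
  rw [betaIntegral, intervalIntegral.integral_of_le zero_le_one, integral_Ioc_eq_integral_Ioo,
    ← image_div_one_add_Ioi,
    integral_image_eq_integral_abs_deriv_smul measurableSet_Ioi hderiv injOn_div_one_add]
  refine setIntegral_congr_fun measurableSet_Ioi fun t (ht : 0 < t) ↦ ?_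
  have hpos : 0 < 1 + t := by linarith
  have hne : (1 + t : ℂ) ≠ 0 := by exact_mod_cast hpos.ne'
  have harg : (1 + t : ℂ).arg ≠ π := by
    rw [← ofReal_one, ← ofReal_add, arg_ofReal_of_nonneg hpos.le]
    exact pi_ne_zero.symm
  have hsub : (1 : ℂ) - (t / (1 + t) : ℝ) = (1 + t : ℂ)⁻¹ := by
    push_cast
    field_simp
    ring
  have hpow : ((t / (1 + t) : ℝ) : ℂ) ^ (u - 1) =
      (t : ℂ) ^ (u - 1) * ((1 + t : ℂ)⁻¹) ^ (u - 1) := by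
    rw [div_eq_mul_inv, ofReal_mul, mul_cpow_ofReal_nonneg ht.le (by positivity)]
    push_cast
    rfl
  rw [hsub, hpow, mul_assoc, ← cpow_add _ _ (inv_ne_zero hne), abs_of_pos (by positivity),
    real_smul, inv_cpow _ _ harg, ← cpow_neg, div_eq_mul_inv _ ((1 + t : ℂ) ^ (u + v)), ← cpow_neg]
  rw [show -(u + v) = -(u - 1 + (v - 1)) + (-2 : ℤ) by push_cast; ring, cpow_add _ _ hne,
    cpow_intCast]
  push_cast
  field_simp

theorem integral_cpow_sub_one_div_one_add_Ioi {z : ℂ} (hz₀ : 0 < z.re) (hz₁ : z.re < 1) :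
    ∫ t : ℝ in Ioi 0, (t : ℂ) ^ (z - 1) / (1 + t) = π / Complex.sin (π * z) := by
  rw [← Complex.Gamma_mul_Gamma_one_sub,
    Complex.Gamma_mul_Gamma_eq_betaIntegral hz₀ (by simpa using hz₁), betaIntegral_eq_integral_Ioi]
  simp

theorem integrableOn_rpow_sub_one_div_one_add {a : ℝ} (ha₀ : 0 < a) (ha₁ : a < 1) :
    IntegrableOn (fun t : ℝ ↦ t ^ (a - 1) / (1 + t)) (Ioi 0) := by
  have hcont : ContinuousOn (fun t : ℝ ↦ (1 + t)⁻¹) (Ioi 0) :=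
    ContinuousOn.inv₀ (by fun_prop) fun t (ht : 0 < t) ↦ by positivity
  have htop : (fun t : ℝ ↦ (1 + t)⁻¹) =O[atTop] (· ^ (-1 : ℝ)) := by
    refine .of_bound' ((eventually_gt_atTop 0).mono fun t ht ↦ ?_)
    rw [Real.rpow_neg_one, norm_of_nonneg (by positivity), norm_of_nonneg (by positivity)]
    exact inv_anti₀ ht (by linarith)
  have hzero : (fun t : ℝ ↦ (1 + t)⁻¹) =O[𝓝[>] 0] (· ^ (-0 : ℝ)) := by
    refine .of_bound' (eventually_nhdsWithin_of_forall fun t (ht : 0 < t) ↦ ?_)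
    rw [neg_zero, Real.rpow_zero, norm_one, norm_of_nonneg (by positivity)]
    exact inv_le_one_of_one_le₀ (by linarith)
  exact mellin_convergent_of_isBigO_scalar (hcont.locallyIntegrableOn measurableSet_Ioi)
    htop ha₁ hzero ha₀

/-! ### Powers of `log (I * t)` -/

theorem log_I_mul_ofReal {t : ℝ} (ht : 0 < t) :
    Complex.log (I * t) = I * (π / 2 - I * Real.log t) := by
  rw [mul_comm, Complex.log_ofReal_mul ht I_ne_zero, Complex.log_I]
  linear_combination (Real.log t : ℂ) * I_sq

theorem re_pi_div_two_sub_I_mul (x : ℝ) : (π / 2 - I * x : ℂ).re = π / 2 := by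
  simp

theorem one_le_norm_log_I_mul {t : ℝ} (ht : 0 < t) : 1 ≤ ‖Complex.log (I * t)‖ := by
  rw [log_I_mul_ofReal ht, norm_mul, norm_I, one_mul]
  refine le_trans ?_ (re_le_norm _)
  rw [re_pi_div_two_sub_I_mul]
  linarith [pi_gt_three]

theorem log_I_mul_ne_zero {t : ℝ} (ht : 0 < t) : Complex.log (I * t) ≠ 0 :=
  norm_pos_iff.1 (one_pos.trans_le (one_le_norm_log_I_mul ht))

theorem norm_log_I_mul_le {t : ℝ} (ht : 0 < t) :
    ‖Complex.log (I * t)‖ ≤ |Real.log t| + 2 := by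
  rw [log_I_mul_ofReal ht, norm_mul, norm_I, one_mul]
  calc ‖(π / 2 - I * Real.log t : ℂ)‖ ≤ ‖(π / 2 : ℂ)‖ + ‖I * (Real.log t : ℂ)‖ := norm_sub_le _ _
    _ = |Real.log t| + π / 2 := by simp [abs_of_pos pi_pos, add_comm]
    _ ≤ |Real.log t| + 2 := by linarith [pi_lt_four]

theorem log_I_mul_cpow {t : ℝ} (ht : 0 < t) (k : ℂ) :
    Complex.log (I * t) ^ k = I ^ k * (π / 2 - I * Real.log t) ^ k := by
  have hre : 0 < (π / 2 - I * Real.log t : ℂ).re := by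
    rw [re_pi_div_two_sub_I_mul]
    positivity
  have hne : (π / 2 - I * Real.log t : ℂ) ≠ 0 := by
    rintro h
    simp [h] at hre
  have harg := abs_lt.1 (abs_arg_lt_pi_div_two_iff.2 (.inl hre))
  rw [log_I_mul_ofReal ht, cpow_def_of_ne_zero (mul_ne_zero I_ne_zero hne),
    cpow_def_of_ne_zero I_ne_zero, cpow_def_of_ne_zero hne, ← Complex.exp_add, ← add_mul,
    Complex.log_mul I_ne_zero hne]
  rw [arg_I]
  constructor <;> linarith

theorem exp_mul_norm_log_le {z : ℂ} {R : ℝ} (hz : 1 ≤ ‖z‖) (hR : 0 ≤ R) :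
    Real.exp (R * ‖Complex.log z‖) ≤ Real.exp (R * π) * ‖z‖ ^ R := by
  have hlog : ‖Complex.log z‖ ≤ Real.log ‖z‖ + π := by
    refine (norm_le_abs_re_add_abs_im _).trans ?_
    rw [log_re, log_im, abs_of_nonneg (Real.log_nonneg hz)]
    gcongr
    exact abs_arg_le_pi z
  rw [Real.rpow_def_of_pos (one_pos.trans_le hz), ← Real.exp_add]
  gcongr
  nlinarith

theorem exp_mul_abs_log_le {t : ℝ} (ht : 0 < t) (ε : ℝ) :
    Real.exp (ε * |Real.log t|) ≤ t ^ ε + t ^ (-ε) := by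
  rw [Real.rpow_def_of_pos ht, Real.rpow_def_of_pos ht, mul_comm]
  rcases abs_choice (Real.log t) with h | h <;> rw [h]
  · exact le_add_of_nonneg_right (Real.exp_pos _).le
  · rw [neg_mul, ← mul_neg]
    exact le_add_of_nonneg_left (Real.exp_pos _).le

theorem exists_norm_log_I_mul_rpow_le (R : ℝ) {ε : ℝ} (hε : 0 < ε) :
    ∃ C, ∀ t : ℝ, 0 < t → ‖Complex.log (I * t)‖ ^ R ≤ C * (t ^ ε + t ^ (-ε)) := by
  obtain ⟨N, hN⟩ := exists_nat_ge R
  refine ⟨N.factorial / ε ^ N * Real.exp (ε * 2), fun t ht ↦ ?_⟩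
  have hfact := Real.pow_div_factorial_le_exp (x := ε * (|Real.log t| + 2)) (by positivity) N
  rw [mul_pow, div_le_iff₀ (by positivity), mul_comm, ← le_div_iff₀ (by positivity)] at hfact
  calc ‖Complex.log (I * t)‖ ^ R
      ≤ ‖Complex.log (I * t)‖ ^ N := by
        rw [← Real.rpow_natCast]
        exact Real.rpow_le_rpow_of_exponent_le (one_le_norm_log_I_mul ht) hN
    _ ≤ (|Real.log t| + 2) ^ N := by
        gcongr
        exact norm_log_I_mul_le ht
    _ ≤ Real.exp (ε * (|Real.log t| + 2)) * N.factorial / ε ^ N := hfact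
    _ = N.factorial / ε ^ N * Real.exp (ε * 2) * Real.exp (ε * |Real.log t|) := by
        rw [mul_add, Real.exp_add]
        ring
    _ ≤ N.factorial / ε ^ N * Real.exp (ε * 2) * (t ^ ε + t ^ (-ε)) := by
        gcongr
        exact exp_mul_abs_log_le ht ε

theorem integrableOn_exp_mul_norm_log_log_I_mul {a R : ℝ} (ha₀ : 0 < a) (ha₁ : a < 1)
    (hR : 0 ≤ R) :
    IntegrableOn (fun t : ℝ ↦ Real.exp (R * ‖Complex.log (Complex.log (I * t))‖) *
      (t ^ (a - 1) / (1 + t))) (Ioi 0) := by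
  obtain ⟨ε, hε₀, hε⟩ := exists_between (lt_min ha₀ (sub_pos.2 ha₁))
  obtain ⟨hεa, hεa'⟩ := lt_min_iff.1 hε
  obtain ⟨C, hC⟩ := exists_norm_log_I_mul_rpow_le R hε₀
  have hdom := ((integrableOn_rpow_sub_one_div_one_add (a := a + ε) (by linarith)
    (by linarith)).add (integrableOn_rpow_sub_one_div_one_add (a := a - ε) (by linarith)
    (by linarith))).const_mul (Real.exp (R * π) * C)
  refine hdom.mono' (Measurable.aestronglyMeasurable (by fun_prop)) ?_
  filter_upwards [ae_restrict_mem measurableSet_Ioi] with t (ht : 0 < t)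
  have hsplit (δ : ℝ) : t ^ (a + δ - 1) = t ^ δ * t ^ (a - 1) := by
    rw [← Real.rpow_add ht]
    ring_nf
  rw [norm_of_nonneg (by positivity), Pi.add_apply, sub_eq_add_neg a ε, hsplit, hsplit]
  calc Real.exp (R * ‖Complex.log (Complex.log (I * t))‖) * (t ^ (a - 1) / (1 + t))
      ≤ Real.exp (R * π) * (C * (t ^ ε + t ^ (-ε))) * (t ^ (a - 1) / (1 + t)) := by
        gcongr
        refine (exp_mul_norm_log_le (one_le_norm_log_I_mul ht) hR).trans ?_
        gcongr
        exact hC t ht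
    _ = _ := by ring

/-- The Beta-type integral `∫₀^∞ t^(a-1) / (1 + t) dt`, weighted by the power `log(it)^k` of the
principal logarithm. -/
noncomputable def logBetaIntegral (a : ℝ) (k : ℂ) : ℂ :=
  ∫ t : ℝ in Ioi 0, Complex.log (I * t) ^ k * ((t ^ (a - 1) / (1 + t) : ℝ) : ℂ)

theorem integrableOn_exp_mul_norm_log_I_mul_cpow {a R : ℝ} (ha₀ : 0 < a) (ha₁ : a < 1)
    (hR : 0 ≤ R) (k : ℂ) :
    IntegrableOn (fun t : ℝ ↦ Real.exp (R * ‖Complex.log (Complex.log (I * t))‖) *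
      ‖cexp (Complex.log (Complex.log (I * t)) * k) * ((t ^ (a - 1) / (1 + t) : ℝ) : ℂ)‖)
      (Ioi 0) := by
  refine (integrableOn_exp_mul_norm_log_log_I_mul ha₀ ha₁ (R := R + ‖k‖) (by positivity)).mono'
    (Measurable.aestronglyMeasurable (by fun_prop)) ?_
  filter_upwards [ae_restrict_mem measurableSet_Ioi] with t (ht : 0 < t)
  rw [norm_of_nonneg (by positivity), norm_mul, norm_real,
    norm_of_nonneg (by positivity : 0 ≤ t ^ (a - 1) / (1 + t)), ← mul_assoc, add_mul, Real.exp_add]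
  gcongr
  refine (norm_exp_le_exp_norm _).trans ?_
  rw [norm_mul, mul_comm]

theorem log_I_mul_cpow_eq_cexp {t : ℝ} (ht : 0 < t) (k : ℂ) :
    Complex.log (I * t) ^ k = cexp (Complex.log (Complex.log (I * t)) * k) :=
  cpow_def_of_ne_zero (log_I_mul_ne_zero ht) k

theorem integrableOn_log_I_mul_cpow {a : ℝ} (ha₀ : 0 < a) (ha₁ : a < 1) (k : ℂ) :
    IntegrableOn (fun t : ℝ ↦ Complex.log (I * t) ^ k * ((t ^ (a - 1) / (1 + t) : ℝ) : ℂ))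
      (Ioi 0) := by
  refine (integrableOn_exp_mul_norm_log_I_mul_cpow ha₀ ha₁ le_rfl k).mono'
    (Measurable.aestronglyMeasurable (by fun_prop)) ?_
  filter_upwards [ae_restrict_mem measurableSet_Ioi] with t ht
  rw [log_I_mul_cpow_eq_cexp ht, zero_mul, Real.exp_zero, one_mul]

theorem differentiable_logBetaIntegral {a : ℝ} (ha₀ : 0 < a) (ha₁ : a < 1) :
    Differentiable ℂ (logBetaIntegral a) := by
  intro k
  refine (differentiableAt_integral_cexp_mul one_pos
    (Measurable.aestronglyMeasurable (by fun_prop)) (Measurable.aestronglyMeasurable (by fun_prop))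
    (integrableOn_exp_mul_norm_log_I_mul_cpow ha₀ ha₁ zero_le_one k)).congr_of_eventuallyEq
    (.of_forall fun z ↦ setIntegral_congr_fun measurableSet_Ioi fun t ht ↦ ?_)
  rw [log_I_mul_cpow_eq_cexp ht]

theorem integral_cexp_log_mul_rpow_div_one_add {a : ℝ} (ha₀ : 0 < a) (ha₁ : a < 1) (w : ℝ) :
    ∫ t : ℝ in Ioi 0, cexp (I * Real.log t * w) * ((t ^ (a - 1) / (1 + t) : ℝ) : ℂ) =
      π / Complex.sin (π * (a + I * w)) := by
  rw [← integral_cpow_sub_one_div_one_add_Ioi (by simpa using ha₀) (by simpa using ha₁)]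
  refine setIntegral_congr_fun measurableSet_Ioi fun t (ht : 0 < t) ↦ ?_
  have hne : (t : ℂ) ≠ 0 := by exact_mod_cast ht.ne'
  have hexp : cexp (I * Real.log t * w) = (t : ℂ) ^ (I * w) := by
    rw [cpow_def_of_ne_zero hne, ofReal_log ht.le]
    ring_nf
  rw [hexp, ofReal_div, ofReal_cpow ht.le, show (a + I * w - 1 : ℂ) = I * w + (a - 1) by ring,
    cpow_add _ _ hne]
  push_cast
  ring

theorem integrable_cpow_sub_one_mul_cexp_mul_rpow_div_one_add {a : ℝ} (ha₀ : 0 < a)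
    (ha₁ : a < 1) {s : ℂ} (hs : 0 < s.re) :
    Integrable (fun p : ℝ × ℝ ↦ (p.2 : ℂ) ^ (s - 1) * cexp (-((π / 2 - I * Real.log p.1) * p.2)) *
        ((p.1 ^ (a - 1) / (1 + p.1) : ℝ) : ℂ))
      ((volume.restrict (Ioi 0)).prod (volume.restrict (Ioi 0))) := by
  refine Integrable.mono' ((integrableOn_rpow_sub_one_div_one_add ha₀ ha₁).mul_prod
    (integrableOn_rpow_sub_one_mul_exp_neg_mul hs pi_div_two_pos))
    (Measurable.aestronglyMeasurable (by fun_prop)) ?_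
  rw [Measure.prod_restrict]
  filter_upwards [ae_restrict_mem (measurableSet_Ioi.prod measurableSet_Ioi)]
    with p ⟨(hp₁ : 0 < p.1), hp₂⟩
  rw [norm_mul, norm_cpow_sub_one_mul_cexp_neg_mul _ _ hp₂, norm_real,
    norm_of_nonneg (by positivity), re_pi_div_two_sub_I_mul, mul_comm]

theorem logBetaIntegral_neg_mul_Gamma {a : ℝ} (ha₀ : 0 < a) (ha₁ : a < 1) {s : ℂ}
    (hs : 0 < s.re) :
    logBetaIntegral a (-s) * Complex.Gamma s =
      I ^ (-s) * mellin (fun w ↦ cexp (-(π / 2 * w)) * (π / Complex.sin (π * (a + I * w)))) s := by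
  have hgamma : ∀ t ∈ Ioi (0 : ℝ),
      Complex.log (I * t) ^ (-s) * ((t ^ (a - 1) / (1 + t) : ℝ) : ℂ) * Complex.Gamma s =
        I ^ (-s) * ∫ w : ℝ in Ioi 0, (w : ℂ) ^ (s - 1) *
          cexp (-((π / 2 - I * Real.log t) * w)) * ((t ^ (a - 1) / (1 + t) : ℝ) : ℂ) := by
    intro t ht
    rw [integral_mul_const, integral_cpow_mul_cexp_neg_mul_Ioi hs
      (by rw [re_pi_div_two_sub_I_mul]; positivity), log_I_mul_cpow ht]
    ring
  rw [logBetaIntegral, ← integral_mul_const, setIntegral_congr_fun measurableSet_Ioi hgamma,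
    integral_const_mul, integral_integral_swap
      (integrable_cpow_sub_one_mul_cexp_mul_rpow_div_one_add ha₀ ha₁ hs), mellin]
  congr 1
  refine setIntegral_congr_fun measurableSet_Ioi fun w _ ↦ ?_
  simp only [smul_eq_mul]
  rw [← integral_cexp_log_mul_rpow_div_one_add ha₀ ha₁, ← integral_const_mul, ← integral_const_mul]
  congr 1 with t
  rw [show (-((π / 2 - I * Real.log t) * w) : ℂ) = -(π / 2 * w) + I * Real.log t * w by ring,
    Complex.exp_add]
  ring

/-! ### Evaluation by Hurwitz zeta values -/

theorem hasSum_neg_one_pow_mul_exp {c w : ℝ} (hc : 0 < c) (hw : 0 < w) (v : ℝ) :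
    HasSum (fun n : ℕ ↦ (-1) ^ n * (Real.exp (-(c * (n + v)) * w) : ℂ))
      (cexp (-(c * v * w)) / (1 + cexp (-(c * w)))) := by
  have hlt : ‖-cexp (-(c * w))‖ < 1 := by
    rw [norm_neg, Complex.norm_exp]
    simpa using mul_pos hc hw
  convert! (hasSum_geometric_of_norm_lt_one hlt).mul_left (cexp (-(c * v * w))) using 1
  · ext n
    rw [neg_pow (cexp _), ← Complex.exp_nat_mul, ofReal_exp, mul_left_comm, ← Complex.exp_add]
    push_cast
    ring_nf
  · rw [sub_neg_eq_add, div_eq_mul_inv]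

theorem summable_one_div_mul_add_rpow {c v r : ℝ} (hc : 0 < c) (hv : 0 < v) (hr : 1 < r) :
    Summable fun n : ℕ ↦ 1 / (c * (n + v)) ^ r := by
  refine ((Real.summable_one_div_nat_add_rpow v r).2 hr |>.mul_left (c ^ r)⁻¹).congr fun n ↦ ?_
  rw [Real.mul_rpow hc.le (by positivity), abs_of_pos (by positivity), one_div, one_div, mul_inv]

theorem hasSum_neg_one_pow_div_cpow {c v : ℝ} (hc : 0 < c) (hv₀ : 0 < v) (hv₁ : v ≤ 1) {s : ℂ}
    (hs : 1 < s.re) :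
    HasSum (fun n : ℕ ↦ (-1) ^ n / ((c * (n + v) : ℝ) : ℂ) ^ s)
      ((2 * c : ℂ) ^ (-s) * (HurwitzZeta.hurwitzZeta ((v / 2 : ℝ) : UnitAddCircle) s -
        HurwitzZeta.hurwitzZeta (((v + 1) / 2 : ℝ) : UnitAddCircle) s)) := by
  have hscale {b : ℝ} (hb : 0 < b) (m : ℕ) :
      (((2 * c) * (m + b) : ℝ) : ℂ) ^ s = (2 * c : ℂ) ^ s * (m + b : ℂ) ^ s := by
    rw [ofReal_mul, mul_cpow_ofReal_nonneg (by positivity) (by positivity)]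
    push_cast
    rfl
  have heven := (HurwitzZeta.hasSum_hurwitzZeta_of_one_lt_re (a := v / 2)
    ⟨by positivity, by linarith⟩ hs).mul_left ((2 * c : ℂ) ^ (-s))
  have hodd := (HurwitzZeta.hasSum_hurwitzZeta_of_one_lt_re (a := (v + 1) / 2)
    ⟨by positivity, by linarith⟩ hs).mul_left (-(2 * c : ℂ) ^ (-s))
  rw [mul_sub, sub_eq_add_neg, ← neg_mul]
  refine HasSum.even_add_odd (heven.congr_fun fun m ↦ ?_) (hodd.congr_fun fun m ↦ ?_)
  · rw [show c * ((2 * m : ℕ) + v) = (2 * c) * (m + v / 2) by push_cast; ring,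
      hscale (by positivity), pow_mul, neg_one_sq, one_pow, cpow_neg, one_div, one_div, mul_inv]
  · rw [show c * ((2 * m + 1 : ℕ) + v) = (2 * c) * (m + (v + 1) / 2) by push_cast; ring,
      hscale (by positivity), pow_succ, pow_mul, neg_one_sq, one_pow, cpow_neg, one_div, one_mul,
      neg_mul, neg_div, one_div, mul_inv]

theorem mellin_cexp_neg_div_one_add_cexp_neg {c v : ℝ} (hc : 0 < c) (hv₀ : 0 < v) (hv₁ : v ≤ 1)
    {s : ℂ} (hs : 1 < s.re) :
    mellin (fun w ↦ cexp (-(c * v * w)) / (1 + cexp (-(c * w)))) s =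
      Complex.Gamma s * (2 * c) ^ (-s) *
        (HurwitzZeta.hurwitzZeta ((v / 2 : ℝ) : UnitAddCircle) s -
          HurwitzZeta.hurwitzZeta (((v + 1) / 2 : ℝ) : UnitAddCircle) s) := by
  have hsum := hasSum_mellin (s := s) (fun n : ℕ ↦ .inr (by positivity)) (by linarith)
    (fun w hw ↦ hasSum_neg_one_pow_mul_exp hc hw v)
    (by simpa using summable_one_div_mul_add_rpow hc hv₀ hs)
  refine hsum.unique ?_
  rw [mul_assoc]
  exact ((hasSum_neg_one_pow_div_cpow hc hv₀ hv₁ hs).mul_left _).congr_fun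
    fun n ↦ mul_div_assoc ..

theorem cexp_mul_pi_div_sin_pi_half_add (w : ℝ) :
    cexp (-(π / 2 * w)) * (π / Complex.sin (π * ((1 / 2 : ℝ) + I * w))) =
      2 * π * (cexp (-((2 * π : ℝ) * (3 / 4 : ℝ) * w)) / (1 + cexp (-((2 * π : ℝ) * w)))) := by
  have hsin : Complex.sin (π * ((1 / 2 : ℝ) + I * w)) =
      cexp (π * w) * (1 + cexp (-((2 * π : ℝ) * w))) / 2 := by
    rw [show (π * ((1 / 2 : ℝ) + I * w) : ℂ) = π * w * I + π / 2 by push_cast; ring,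
      Complex.sin_add_pi_div_two, Complex.cos_mul_I, Complex.cosh, mul_add, ← Complex.exp_add]
    push_cast
    ring_nf
  have hexp : cexp (-(π / 2 * w)) =
      cexp (-((2 * π : ℝ) * (3 / 4 : ℝ) * w)) * cexp (π * w) := by
    rw [← Complex.exp_add]
    push_cast
    ring_nf
  rw [hsin, hexp]
  field_simp

theorem logBetaIntegral_half_of_re_lt {k : ℂ} (hk : k.re < -1) :
    logBetaIntegral (1 / 2) k = I ^ k * 2 ^ (2 * k + 1) * (π : ℂ) ^ (k + 1) *
      (HurwitzZeta.hurwitzZeta ((3 / 8 : ℝ) : UnitAddCircle) (-k) -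
        HurwitzZeta.hurwitzZeta ((7 / 8 : ℝ) : UnitAddCircle) (-k)) := by
  have hs : 1 < (-k).re := by
    rw [neg_re]
    linarith
  have hpi : (π : ℂ) ≠ 0 := ofReal_ne_zero.2 pi_ne_zero
  have hpow : (2 * (2 * π : ℝ) : ℂ) ^ k = 2 ^ (2 * k) * (π : ℂ) ^ k := by
    rw [show (2 * (2 * π : ℝ) : ℂ) = ((2 ^ 2 : ℝ) : ℂ) * (π : ℂ) by push_cast; ring,
      mul_cpow_ofReal_nonneg (by positivity) pi_pos.le, ofReal_pow, ofReal_ofNat]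
    simpa using (natCast_cpow_natCast_mul 2 2 k).symm
  have h := logBetaIntegral_neg_mul_Gamma (a := 1 / 2) (by norm_num) (by norm_num)
    (s := -k) (by linarith)
  simp only [cexp_mul_pi_div_sin_pi_half_add, ← smul_eq_mul (2 * (π : ℂ))] at h
  rw [mellin_const_smul, mellin_cexp_neg_div_one_add_cexp_neg two_pi_pos (by norm_num)
    (by norm_num) hs, neg_neg, hpow, smul_eq_mul] at h
  refine mul_right_cancel₀ (Complex.Gamma_ne_zero_of_re_pos (by linarith : 0 < (-k).re)) ?_
  rw [h, cpow_add _ _ hpi, cpow_add _ _ two_ne_zero, cpow_one, cpow_one]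
  norm_num
  ring

theorem logBetaIntegral_half (k : ℂ) :
    logBetaIntegral (1 / 2) k = I ^ k * 2 ^ (2 * k + 1) * (π : ℂ) ^ (k + 1) *
      (HurwitzZeta.hurwitzZeta ((3 / 8 : ℝ) : UnitAddCircle) (-k) -
        HurwitzZeta.hurwitzZeta ((7 / 8 : ℝ) : UnitAddCircle) (-k)) := by
  have hright : Differentiable ℂ fun k : ℂ ↦ I ^ k * 2 ^ (2 * k + 1) * (π : ℂ) ^ (k + 1) *
      (HurwitzZeta.hurwitzZeta ((3 / 8 : ℝ) : UnitAddCircle) (-k) -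
        HurwitzZeta.hurwitzZeta ((7 / 8 : ℝ) : UnitAddCircle) (-k)) :=
    (((differentiable_id.const_cpow (.inl I_ne_zero)).mul
      (Differentiable.const_cpow (by fun_prop) (.inl two_ne_zero))).mul
      (Differentiable.const_cpow (by fun_prop) (.inl (ofReal_ne_zero.2 pi_ne_zero)))).mul
      ((HurwitzZeta.differentiable_hurwitzZeta_sub_hurwitzZeta _ _).comp differentiable_neg)
  have hnhds : ∀ᶠ z : ℂ in 𝓝 (-2), z.re < -1 :=
    (isOpen_lt continuous_re continuous_const).mem_nhds (by norm_num)
  have heq := AnalyticOnNhd.eq_of_eventuallyEq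
    (fun z _ ↦ (differentiable_logBetaIntegral (by norm_num) (by norm_num)).analyticAt z)
    (fun z _ ↦ hright.analyticAt z) (hnhds.mono fun z hz ↦ logBetaIntegral_half_of_re_lt hz)
  exact congrFun heq k

/-! ### Laplace transforms of incomplete Gamma functions -/

/-- The normalized upper incomplete Gamma function `Q(a, x) = Γ(a, x) / Γ(a)`, through which
`E_{1/n}` is expressed; meant for `0 ≤ a` and `0 ≤ x`. The junk value `Γ(0) = 0`
makes `Q(0, x) = 0`, which for `0 < x` is also the limit as `a → 0`. -/
noncomputable def regularizedUpperGamma (a x : ℝ) : ℝ :=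
  (∫ s in Ioi x, Real.exp (-s) * s ^ (a - 1)) / Real.Gamma a

theorem regularizedUpperGamma_zero_left (x : ℝ) : regularizedUpperGamma 0 x = 0 := by
  rw [regularizedUpperGamma, Real.Gamma_zero, div_zero]

theorem regularizedUpperGamma_nonneg {a x : ℝ} (ha : 0 ≤ a) (hx : 0 ≤ x) :
    0 ≤ regularizedUpperGamma a x := by
  refine div_nonneg (setIntegral_nonneg measurableSet_Ioi fun s hs ↦ ?_) (Gamma_nonneg_of_nonneg ha)
  have : 0 < s := hx.trans_lt hs
  positivity

@[fun_prop]
theorem measurable_regularizedUpperGamma (a : ℝ) : Measurable (regularizedUpperGamma a) := by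
  have hmeas : Measurable (({p : ℝ × ℝ | p.1 < p.2}).indicator
      fun p ↦ Real.exp (-p.2) * p.2 ^ (a - 1)) :=
    Measurable.indicator (by fun_prop) (measurableSet_lt measurable_fst measurable_snd)
  convert! (hmeas.stronglyMeasurable.integral_prod_right' (ν := volume)).measurable.div_const
    (Real.Gamma a) using 2 with x
  rw [regularizedUpperGamma, ← integral_indicator measurableSet_Ioi]
  rfl

theorem intervalIntegral_exp_neg_mul_rpow {a x : ℝ} (ha : 0 < a) (hx : 0 ≤ x) :
    ∫ s in 0..x, Real.exp (-s) * s ^ (a - 1) =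
      Real.Gamma a * (1 - regularizedUpperGamma a x) := by
  have hconv := GammaIntegral_convergent ha
  rw [mul_one_sub, regularizedUpperGamma, mul_div_cancel₀ _ (Gamma_pos_of_pos ha).ne',
    Gamma_eq_integral ha, intervalIntegral.integral_of_le hx, eq_sub_iff_add_eq,
    ← Ioc_union_Ioi_eq_Ioi hx, setIntegral_union (Ioc_disjoint_Ioi le_rfl) measurableSet_Ioi
      (hconv.mono_set Ioc_subset_Ioi_self) (hconv.mono_set (Ioi_subset_Ioi hx))]

theorem intervalIntegral_rpow_mul_sub_pow {a x : ℝ} (ha : 0 < a) (hx : 0 < x) (n : ℕ) :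
    ∫ s in 0..x, s ^ (a - 1) * (x - s) ^ n =
      x ^ (a + n) * (Real.Gamma a * n.factorial / Real.Gamma (a + n + 1)) := by
  have hbeta := betaIntegral_scaled (a : ℂ) (n + 1) hx
  rw [betaIntegral_eq_Gamma_mul_div _ _ (by simpa using ha) (by norm_cast; positivity),
    Complex.Gamma_nat_eq_factorial] at hbeta
  simp only [← add_assoc, add_sub_cancel_right, cpow_natCast] at hbeta
  rw [← ofReal_inj, ← intervalIntegral.integral_ofReal]
  push_cast [← Complex.Gamma_ofReal, ofReal_cpow hx.le]
  rw [← hbeta]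
  refine intervalIntegral.integral_congr fun s hs ↦ ?_
  rw [uIcc_of_le hx.le] at hs
  push_cast [ofReal_cpow hs.1]
  rfl

theorem hasSum_rpow_div_Gamma {a x : ℝ} (ha : 0 ≤ a) (hx : 0 < x) :
    HasSum (fun n : ℕ ↦ x ^ (a + n) / Real.Gamma (a + n + 1))
      (Real.exp x * (1 - regularizedUpperGamma a x)) := by
  rcases ha.eq_or_lt with rfl | ha
  · simpa [regularizedUpperGamma_zero_left, Real.Gamma_nat_eq_factorial, Real.exp_eq_exp_ℝ] using
      NormedSpace.expSeries_div_hasSum_exp x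
  -- Expand `e^(x-s)` under the integral in `∫₀^x e^(x-s) s^(a-1) ds`; each term is a Beta integral.
  have hexp (s : ℝ) : HasSum (fun n : ℕ ↦ s ^ (a - 1) * (x - s) ^ n / n.factorial)
      (Real.exp x * (Real.exp (-s) * s ^ (a - 1))) := by
    convert! (NormedSpace.expSeries_div_hasSum_exp (x - s)).mul_left (s ^ (a - 1)) using 1
    · simp only [mul_div_assoc]
    · rw [← Real.exp_eq_exp_ℝ, sub_eq_add_neg x s, Real.exp_add]
      ring
  have hint : IntervalIntegrable (fun s ↦ Real.exp (-s) * s ^ (a - 1)) volume 0 x :=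
    (intervalIntegral.intervalIntegrable_rpow' (by linarith)).continuousOn_mul (by fun_prop)
  have hsum := intervalIntegral.hasSum_integral_of_dominated_convergence (μ := volume)
    (a := 0) (b := x) (F := fun (n : ℕ) s ↦ s ^ (a - 1) * (x - s) ^ n / n.factorial)
    (fun n s ↦ s ^ (a - 1) * (x - s) ^ n / n.factorial)
    (fun n ↦ Measurable.aestronglyMeasurable (by fun_prop)) ?_
    (.of_forall fun s _ ↦ (hexp s).summable) ?_ (.of_forall fun s _ ↦ hexp s)
  · rw [intervalIntegral.integral_const_mul, intervalIntegral_exp_neg_mul_rpow ha hx.le,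
      mul_left_comm] at hsum
    convert! hsum.div_const (Real.Gamma a) using 1
    · ext n
      have := n.factorial_ne_zero
      rw [intervalIntegral.integral_div, intervalIntegral_rpow_mul_sub_pow ha hx]
      field_simp [(Gamma_pos_of_pos ha).ne']
    · rw [mul_div_cancel_left₀ _ (Gamma_pos_of_pos ha).ne']
  · refine fun n ↦ .of_forall fun s hs ↦ le_of_eq (norm_of_nonneg ?_)
    rw [uIoc_of_le hx.le] at hs
    have : 0 ≤ x - s := sub_nonneg.2 hs.2
    have : 0 < s := hs.1
    positivity
  · simpa only [(hexp _).tsum_eq] using hint.const_mul (Real.exp x)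

/-- The integrand, over `(s, x)`, of the Laplace integral `∫₀^∞ e^(-x) e^(Tx) Γ(a, Tx) dx` after
`Γ(a, Tx)` is written as an integral over `s > Tx`. -/
noncomputable def upperGammaKernel (a T s x : ℝ) : ℝ :=
  if T * x < s then Real.exp (-s) * s ^ (a - 1) * Real.exp ((T - 1) * x) else 0

theorem upperGammaKernel_nonneg (a T : ℝ) {s : ℝ} (hs : 0 < s) (x : ℝ) :
    0 ≤ upperGammaKernel a T s x := by
  unfold upperGammaKernel
  split_ifs <;> positivity

theorem measurable_upperGammaKernel (a T : ℝ) :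
    Measurable (Function.uncurry (upperGammaKernel a T)) :=
  Measurable.ite (measurableSet_lt (by fun_prop) measurable_fst) (by fun_prop) measurable_const

theorem upperGammaKernel_eq_indicator_left (a T s x : ℝ) :
    upperGammaKernel a T s x = (Ioi (T * x)).indicator
      (fun s ↦ Real.exp (-s) * s ^ (a - 1) * Real.exp ((T - 1) * x)) s := by
  simp [upperGammaKernel, indicator_apply]

theorem upperGammaKernel_eq_indicator_right (a s x : ℝ) {T : ℝ} (hT : 0 < T) :
    upperGammaKernel a T s x = (Iio (s / T)).indicator
      (fun x ↦ Real.exp (-s) * s ^ (a - 1) * Real.exp ((T - 1) * x)) x := by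
  simp [upperGammaKernel, indicator_apply, lt_div_iff₀' hT]

theorem integral_upperGammaKernel_left {a T x : ℝ} (ha : 0 < a) (hT : 0 ≤ T) (hx : 0 ≤ x) :
    ∫ s in Ioi 0, upperGammaKernel a T s x =
      Real.Gamma a * (Real.exp ((T - 1) * x) * regularizedUpperGamma a (T * x)) := by
  simp only [upperGammaKernel_eq_indicator_left]
  rw [setIntegral_indicator measurableSet_Ioi, Ioi_inter_Ioi, sup_of_le_right (by positivity),
    integral_mul_const, regularizedUpperGamma]
  field_simp [(Gamma_pos_of_pos ha).ne']

theorem integrableOn_upperGammaKernel_right (a s : ℝ) {T : ℝ} (hT : 0 < T) :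
    IntegrableOn (upperGammaKernel a T s) (Ioi 0) := by
  simp only [funext fun x ↦ upperGammaKernel_eq_indicator_right a s x hT]
  rw [IntegrableOn, integrable_indicator_iff measurableSet_Iio, IntegrableOn,
    Measure.restrict_restrict measurableSet_Iio, inter_comm, Ioi_inter_Iio]
  exact (Continuous.integrableOn_Icc (by fun_prop)).mono_set Ioo_subset_Icc_self

theorem integral_upperGammaKernel_right (a : ℝ) {T s : ℝ} (hT : 0 < T) (hT' : T ≠ 1)
    (hs : 0 < s) :
    ∫ x in Ioi 0, upperGammaKernel a T s x =
      (s ^ (a - 1) * Real.exp (-(1 / T) * s) - s ^ (a - 1) * Real.exp (-1 * s)) / (T - 1) := by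
  have hne : T - 1 ≠ 0 := sub_ne_zero.2 hT'
  simp only [upperGammaKernel_eq_indicator_right a s _ hT]
  rw [setIntegral_indicator measurableSet_Iio, Ioi_inter_Iio, ← integral_Ioc_eq_integral_Ioo,
    ← intervalIntegral.integral_of_le (by positivity), intervalIntegral.integral_const_mul,
    intervalIntegral.integral_comp_mul_left (fun x ↦ Real.exp x) hne, integral_exp, mul_zero,
    Real.exp_zero, smul_eq_mul, show -(1 / T) * s = -s + (T - 1) * (s / T) by field_simp; ring,
    Real.exp_add, neg_one_mul]
  field_simp

theorem integrable_upperGammaKernel {a T : ℝ} (ha : 0 < a) (hT : 0 < T) (hT' : T ≠ 1) :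
    Integrable (Function.uncurry (upperGammaKernel a T))
      ((volume.restrict (Ioi 0)).prod (volume.restrict (Ioi 0))) := by
  rw [integrable_prod_iff (measurable_upperGammaKernel a T).aestronglyMeasurable]
  refine ⟨.of_forall fun s ↦ integrableOn_upperGammaKernel_right a s hT, ?_⟩
  refine (((integrableOn_rpow_sub_one_mul_exp_neg_mul ha (one_div_pos.2 hT)).sub
    (integrableOn_rpow_sub_one_mul_exp_neg_mul ha one_pos)).div_const (T - 1)).congr ?_
  filter_upwards [ae_restrict_mem measurableSet_Ioi] with s hs
  simp only [Function.uncurry_apply_pair, norm_of_nonneg (upperGammaKernel_nonneg a T hs _)]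
  exact (integral_upperGammaKernel_right a hT hT' hs).symm

theorem integrableOn_exp_mul_regularizedUpperGamma {a T : ℝ} (ha : 0 ≤ a) (hT : 0 < T)
    (hT' : T ≠ 1) :
    IntegrableOn (fun x ↦ Real.exp ((T - 1) * x) * regularizedUpperGamma a (T * x)) (Ioi 0) := by
  rcases ha.eq_or_lt with rfl | ha
  · simp only [regularizedUpperGamma_zero_left, mul_zero, integrableOn_zero]
  refine ((integrable_upperGammaKernel ha hT hT').integral_prod_right.const_mul
    (Real.Gamma a)⁻¹).congr ?_
  filter_upwards [ae_restrict_mem measurableSet_Ioi] with x (hx : 0 < x)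
  rw [Function.uncurry_def, integral_upperGammaKernel_left ha hT.le hx.le,
    inv_mul_cancel_left₀ (Gamma_pos_of_pos ha).ne']

theorem integral_exp_mul_regularizedUpperGamma {a T : ℝ} (ha : 0 ≤ a) (hT : 0 < T)
    (hT' : T ≠ 1) :
    ∫ x in Ioi 0, Real.exp ((T - 1) * x) * regularizedUpperGamma a (T * x) =
      (T ^ a - 1) / (T - 1) := by
  rcases ha.eq_or_lt with rfl | ha
  · simp only [regularizedUpperGamma_zero_left, mul_zero, integral_zero, Real.rpow_zero, sub_self,
      zero_div]
  have hright {c : ℝ} (hc : 0 < c) :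
      ∫ s in Ioi 0, s ^ (a - 1) * Real.exp (-c * s) = (1 / c) ^ a * Real.Gamma a := by
    simpa only [neg_mul] using Real.integral_rpow_mul_exp_neg_mul_Ioi ha hc
  refine mul_left_cancel₀ (Gamma_pos_of_pos ha).ne' ?_
  rw [← integral_const_mul, ← setIntegral_congr_fun measurableSet_Ioi
      fun x hx ↦ integral_upperGammaKernel_left ha hT.le (le_of_lt hx),
    ← integral_integral_swap (integrable_upperGammaKernel ha hT hT'),
    setIntegral_congr_fun measurableSet_Ioi fun s hs ↦ integral_upperGammaKernel_right a hT hT' hs,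
    integral_div, integral_sub (integrableOn_rpow_sub_one_mul_exp_neg_mul ha (one_div_pos.2 hT))
      (integrableOn_rpow_sub_one_mul_exp_neg_mul ha one_pos), hright (one_div_pos.2 hT),
    hright one_pos, one_div_one_div, div_one, Real.one_rpow]
  ring

/-! ### The Mittag-Leffler function at roots of unity -/

theorem hasSum_of_residues {M : Type*} [AddCommMonoid M] [TopologicalSpace M] [ContinuousAdd M]
    {n : ℕ} (hn : n ≠ 0) {f : ℕ → M} {S : ℕ → M}
    (h : ∀ j < n, HasSum (fun q ↦ f (n * q + j)) (S j)) :
    HasSum f (∑ j ∈ Finset.range n, S j) := by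
  have hclass : ∀ j ∈ Finset.range n, HasSum (fun m ↦ if m % n = j then f m else 0) (S j) := by
    intro j hj
    have hj' := Finset.mem_range.1 hj
    have hinj : Function.Injective fun q ↦ n * q + j :=
      (add_left_injective j).comp (mul_right_injective₀ hn)
    refine (hinj.hasSum_iff fun m hm ↦ if_neg ?_).1 ((h j hj').congr_fun fun q ↦ if_pos ?_)
    · rintro rfl
      exact hm ⟨m / n, Nat.div_add_mod m n⟩
    · rw [Nat.mul_add_mod, Nat.mod_eq_of_lt hj']
  refine (hasSum_sum hclass).congr_fun fun m ↦ ?_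
  rw [Finset.sum_ite_eq, if_pos (Finset.mem_range.2 (Nat.mod_lt m (Nat.pos_of_ne_zero hn)))]

theorem pow_rpow_natCast_div {n : ℕ} (hn : n ≠ 0) {t : ℝ} (ht : 0 ≤ t) (j : ℕ) :
    (t ^ n) ^ (j / n : ℝ) = t ^ j := by
  rw [← Real.rpow_natCast t n, ← Real.rpow_mul ht, mul_div_cancel₀ _ (Nat.cast_ne_zero.2 hn),
    Real.rpow_natCast]

theorem mittagLeffler_one_div_mul {n : ℕ} (hn : n ≠ 0) {ω : ℂ} (hω : ω ^ n = 1) (hω' : ω ≠ 1)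
    {y : ℝ} (hy : 0 < y) :
    mittagLeffler (1 / n) (ω * y) = -∑ j ∈ Finset.range n,
      ω ^ j * (Real.exp (y ^ n) * regularizedUpperGamma (j / n) (y ^ n) : ℝ) := by
  have hclass : ∀ j < n, HasSum
      (fun q : ℕ ↦ (ω * y) ^ (n * q + j) / Complex.Gamma (1 / n * (n * q + j : ℕ) + 1))
      (ω ^ j * (Real.exp (y ^ n) * (1 - regularizedUpperGamma (j / n) (y ^ n)) : ℝ)) := by
    intro j _
    refine ((hasSum_ofReal.2 (hasSum_rpow_div_Gamma (a := j / n) (by positivity)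
      (pow_pos hy n))).mul_left (ω ^ j)).congr_fun fun q ↦ ?_
    have harg : (1 / n * (n * q + j : ℕ) + 1 : ℂ) = ((j / n + q + 1 : ℝ) : ℂ) := by
      push_cast
      field_simp
      ring
    rw [harg, Complex.Gamma_ofReal, mul_pow, pow_add ω, pow_mul, hω, one_pow, one_mul,
      Real.rpow_add_natCast (by positivity), pow_rpow_natCast_div hn hy.le, pow_add, pow_mul]
    push_cast
    ring
  -- This cancels the growing part `e^(y^n)` of the residue-class sums.
  have hgeom : ∑ j ∈ Finset.range n, ω ^ j = 0 := by
    rw [geom_sum_eq hω', hω, sub_self, zero_div]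
  rw [mittagLeffler, (hasSum_of_residues hn hclass).tsum_eq]
  simp only [ofReal_sub, mul_sub, mul_one, Finset.sum_sub_distrib]
  rw [← Finset.sum_mul, hgeom, zero_mul, zero_sub]

theorem cexp_neg_mul_mittagLeffler {n : ℕ} (hn : n ≠ 0) {ω : ℂ} (hω : ω ^ n = 1) (hω' : ω ≠ 1)
    {x t : ℝ} (hx : 0 < x) (ht : 0 < t) :
    cexp (-x) * mittagLeffler (1 / n) (ω * (x ^ (1 / n : ℝ) * t : ℝ)) =
      -∑ j ∈ Finset.range n, ω ^ j *
        (Real.exp ((t ^ n - 1) * x) * regularizedUpperGamma (j / n) (t ^ n * x) : ℝ) := by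
  have hpow : (x ^ (1 / n : ℝ) * t) ^ n = t ^ n * x := by
    rw [mul_pow, one_div, Real.rpow_inv_natCast_pow hx.le hn, mul_comm]
  rw [mittagLeffler_one_div_mul hn hω hω' (by positivity), hpow, mul_neg, Finset.mul_sum]
  refine congrArg _ (Finset.sum_congr rfl fun j _ ↦ ?_)
  rw [sub_one_mul, sub_eq_neg_add, Real.exp_add]
  push_cast
  ring

theorem integral_exp_mul_regularizedUpperGamma_pow {n : ℕ} (hn : n ≠ 0) (j : ℕ) {t : ℝ}
    (ht : 0 < t) (ht' : t ≠ 1) :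
    ∫ x in Ioi 0, Real.exp ((t ^ n - 1) * x) * regularizedUpperGamma (j / n) (t ^ n * x) =
      (t ^ j - 1) / (t ^ n - 1) := by
  rw [integral_exp_mul_regularizedUpperGamma (by positivity) (by positivity)
    ((pow_eq_one_iff_of_nonneg ht.le hn).not.2 ht'), pow_rpow_natCast_div hn ht.le]

theorem integrableOn_exp_mul_regularizedUpperGamma_pow {n : ℕ} (hn : n ≠ 0) (j : ℕ) {t : ℝ}
    (ht : 0 < t) (ht' : t ≠ 1) :
    IntegrableOn (fun x ↦ Real.exp ((t ^ n - 1) * x) * regularizedUpperGamma (j / n) (t ^ n * x))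
      (Ioi 0) :=
  integrableOn_exp_mul_regularizedUpperGamma (by positivity) (by positivity)
    ((pow_eq_one_iff_of_nonneg ht.le hn).not.2 ht')

theorem integral_cexp_neg_mul_mittagLeffler {n : ℕ} (hn : n ≠ 0) {ω : ℂ} (hω : ω ^ n = 1)
    (hω' : ω ≠ 1) {t : ℝ} (ht : 0 < t) (ht' : t ≠ 1) :
    ∫ x : ℝ in Ioi 0, cexp (-x) * mittagLeffler (1 / n) (ω * (x ^ (1 / n : ℝ) * t : ℝ)) =
      1 / (1 - ω * t) := by
  have htn : ((t : ℂ) ^ n - 1) ≠ 0 := by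
    exact_mod_cast sub_ne_zero.2 ((pow_eq_one_iff_of_nonneg ht.le hn).not.2 ht')
  have hωt : ω * t ≠ 1 := by
    intro h
    have hpow : (ω * t) ^ n = t ^ n := by rw [mul_pow, hω, one_mul]
    rw [h, one_pow] at hpow
    exact htn (sub_eq_zero.2 hpow.symm)
  have hgeom : ∑ j ∈ Finset.range n, ω ^ j * ((t : ℂ) ^ j - 1) = (t ^ n - 1) / (ω * t - 1) := by
    simp only [mul_sub, ← mul_pow, mul_one, Finset.sum_sub_distrib]
    rw [geom_sum_eq hωt, geom_sum_eq hω', mul_pow, hω, sub_self, zero_div, one_mul, sub_zero]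
  rw [setIntegral_congr_fun measurableSet_Ioi
    fun x hx ↦ cexp_neg_mul_mittagLeffler hn hω hω' hx ht, integral_neg, integral_finsetSum _
    fun j _ ↦ (integrableOn_exp_mul_regularizedUpperGamma_pow hn j ht ht').ofReal.const_mul _]
  simp only [integral_const_mul, integral_complex_ofReal,
    integral_exp_mul_regularizedUpperGamma_pow hn _ ht ht']
  push_cast
  simp only [← mul_div_assoc]
  rw [← Finset.sum_div, hgeom, div_right_comm, div_self htn, ← neg_sub 1 (ω * (t : ℂ)), div_neg,
    neg_neg]

theorem pow_sub_one_div_pow_sub_one_le {j n : ℕ} (hj : j < n) {t : ℝ} (ht : 0 ≤ t)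
    (ht' : t ≠ 1) : (t ^ j - 1) / (t ^ n - 1) ≤ 2 / (1 + t) := by
  have hmono {m : ℕ} (hm : m ≤ n) : ∑ i ∈ Finset.range m, t ^ i ≤ ∑ i ∈ Finset.range n, t ^ i :=
    Finset.sum_le_sum_of_subset_of_nonneg (Finset.range_mono hm) fun i _ _ ↦ pow_nonneg ht i
  have hsucc := hmono (Nat.succ_le_of_lt hj)
  rw [Finset.sum_range_succ', pow_zero] at hsucc
  simp only [pow_succ, ← Finset.sum_mul] at hsucc
  have hpos : 0 < ∑ i ∈ Finset.range n, t ^ i := geom_sum_pos ht (by omega)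
  rw [← div_div_div_cancel_right₀ (sub_ne_zero.2 ht'), ← geom_sum_eq ht', ← geom_sum_eq ht',
    div_le_div_iff₀ hpos (by positivity)]
  linarith [hmono hj.le]

theorem integral_norm_exp_mul_regularizedUpperGamma_pow_mul {n : ℕ} (hn : n ≠ 0) (j : ℕ) {t : ℝ}
    (ht : 0 < t) (ht' : t ≠ 1) (c : ℂ) :
    ∫ x in Ioi 0, ‖((Real.exp ((t ^ n - 1) * x) *
        regularizedUpperGamma (j / n) (t ^ n * x) : ℝ) : ℂ) * c‖ =
      (t ^ j - 1) / (t ^ n - 1) * ‖c‖ := by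
  rw [← integral_exp_mul_regularizedUpperGamma_pow hn j ht ht', ← integral_mul_const]
  refine setIntegral_congr_fun measurableSet_Ioi fun x (hx : 0 < x) ↦ ?_
  rw [norm_mul, norm_real, norm_of_nonneg (mul_nonneg (Real.exp_pos _).le
    (regularizedUpperGamma_nonneg (by positivity) (by positivity)))]

theorem norm_one_add_ofReal {t : ℝ} (ht : 0 ≤ t) : ‖(1 + t : ℂ)‖ = 1 + t := by
  rw [← ofReal_one, ← ofReal_add, norm_real, norm_of_nonneg (by positivity)]

theorem aestronglyMeasurable_of_integrableOn_div_one_add {g : ℝ → ℂ}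
    (hg : IntegrableOn (fun t : ℝ ↦ g t / (1 + t)) (Ioi 0)) :
    AEStronglyMeasurable g (volume.restrict (Ioi 0)) := by
  refine (hg.aestronglyMeasurable.mul (g := fun t : ℝ ↦ (1 + t : ℂ))
    (Measurable.aestronglyMeasurable (by fun_prop))).congr ?_
  filter_upwards [ae_restrict_mem measurableSet_Ioi] with t (ht : 0 < t)
  refine div_mul_cancel₀ _ (norm_ne_zero_iff.1 ?_)
  rw [norm_one_add_ofReal ht.le]
  positivity

theorem integrable_exp_mul_regularizedUpperGamma_pow_mul {j n : ℕ} (hj : j < n) {g : ℝ → ℂ}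
    (hg : IntegrableOn (fun t : ℝ ↦ g t / (1 + t)) (Ioi 0)) :
    Integrable (fun p : ℝ × ℝ ↦ ((Real.exp ((p.2 ^ n - 1) * p.1) *
        regularizedUpperGamma (j / n) (p.2 ^ n * p.1) : ℝ) : ℂ) * g p.2)
      ((volume.restrict (Ioi 0)).prod (volume.restrict (Ioi 0))) := by
  have hn : n ≠ 0 := by omega
  have hne : ∀ᵐ t ∂volume.restrict (Ioi (0 : ℝ)), t ≠ 1 :=
    ae_restrict_of_ae (Measure.ae_ne volume 1)
  have hmeas : AEStronglyMeasurable (fun p : ℝ × ℝ ↦ ((Real.exp ((p.2 ^ n - 1) * p.1) *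
      regularizedUpperGamma (j / n) (p.2 ^ n * p.1) : ℝ) : ℂ) * g p.2)
      ((volume.restrict (Ioi 0)).prod (volume.restrict (Ioi 0))) :=
    (Measurable.aestronglyMeasurable (by fun_prop)).mul
      (aestronglyMeasurable_of_integrableOn_div_one_add hg).comp_snd
  refine (integrable_prod_iff' hmeas).2 ⟨?_, ?_⟩
  · filter_upwards [ae_restrict_mem measurableSet_Ioi, hne] with t ht ht'
    exact (integrableOn_exp_mul_regularizedUpperGamma_pow hn j ht ht').ofReal.mul_const (g t)
  · refine (hg.norm.const_mul 2).mono' hmeas.norm.prod_swap.integral_prod_right' ?_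
    filter_upwards [ae_restrict_mem measurableSet_Ioi, hne] with t (ht : 0 < t) ht'
    rw [norm_of_nonneg (integral_nonneg fun _ ↦ norm_nonneg _),
      integral_norm_exp_mul_regularizedUpperGamma_pow_mul hn j ht ht', norm_div,
      norm_one_add_ofReal ht.le]
    calc (t ^ j - 1) / (t ^ n - 1) * ‖g t‖
        ≤ 2 / (1 + t) * ‖g t‖ :=
          mul_le_mul_of_nonneg_right (pow_sub_one_div_pow_sub_one_le hj ht.le ht') (norm_nonneg _)
      _ = 2 * (‖g t‖ / (1 + t)) := by ring

theorem integrable_cexp_neg_mul_mittagLeffler_mul {n : ℕ} (hn : n ≠ 0) {ω : ℂ} (hω : ω ^ n = 1)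
    (hω' : ω ≠ 1) {g : ℝ → ℂ} (hg : IntegrableOn (fun t : ℝ ↦ g t / (1 + t)) (Ioi 0)) :
    Integrable (Function.uncurry fun x t : ℝ ↦
        cexp (-x) * mittagLeffler (1 / n) (ω * (x ^ (1 / n : ℝ) * t : ℝ)) * g t)
      ((volume.restrict (Ioi 0)).prod (volume.restrict (Ioi 0))) := by
  refine (integrable_finsetSum (Finset.range n) fun j hj ↦
    (integrable_exp_mul_regularizedUpperGamma_pow_mul (Finset.mem_range.1 hj) hg).const_mul
      (ω ^ j)).neg.congr ?_
  rw [Measure.prod_restrict]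
  filter_upwards [ae_restrict_mem (measurableSet_Ioi.prod measurableSet_Ioi)] with p hp
  simp only [Function.uncurry_def, Pi.neg_apply]
  rw [cexp_neg_mul_mittagLeffler hn hω hω' hp.1 hp.2, neg_mul, Finset.sum_mul]
  simp only [mul_assoc]

theorem integral_integral_cexp_neg_mul_mittagLeffler_mul {n : ℕ} (hn : n ≠ 0) {ω : ℂ}
    (hω : ω ^ n = 1) (hω' : ω ≠ 1) {g : ℝ → ℂ}
    (hg : IntegrableOn (fun t : ℝ ↦ g t / (1 + t)) (Ioi 0)) :
    ∫ x : ℝ in Ioi 0, ∫ t in Ioi 0,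
        cexp (-x) * mittagLeffler (1 / n) (ω * (x ^ (1 / n : ℝ) * t : ℝ)) * g t =
      ∫ t in Ioi 0, g t / (1 - ω * t) := by
  rw [integral_integral_swap (integrable_cexp_neg_mul_mittagLeffler_mul hn hω hω' hg)]
  refine integral_congr_ae ?_
  filter_upwards [ae_restrict_mem measurableSet_Ioi,
    ae_restrict_of_ae (Measure.ae_ne volume 1)] with t ht ht'
  rw [integral_mul_const, integral_cexp_neg_mul_mittagLeffler hn hω hω' ht ht', one_div_mul_eq_div]

theorem integral_mul_comp_mul_cpow_div (φ : ℝ → ℂ) (ψ : ℂ → ℂ) (c : ℝ) (s : ℂ) {x : ℝ}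
    (hx : 0 < x) :
    ∫ u : ℝ in Ioi 0, φ u * ψ (u * (x : ℂ) ^ (-c : ℂ)) / (u ^ s * (x : ℂ) ^ (c * (1 - s))) =
      ∫ t : ℝ in Ioi 0, φ (x ^ c * t) * (ψ t * t ^ (-s)) := by
  have hxc : 0 < x ^ c := by positivity
  have hx' : (x : ℂ) ≠ 0 := ofReal_ne_zero.2 hx.ne'
  have hxc' : ((x ^ c : ℝ) : ℂ) ≠ 0 := ofReal_ne_zero.2 hxc.ne'
  have hsubst := integral_comp_mul_left_Ioi'
    (fun u : ℝ ↦ φ u * ψ (u * (x : ℂ) ^ (-c : ℂ)) / (u ^ s * (x : ℂ) ^ (c * (1 - s)))) 0 hxc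
  rw [mul_zero] at hsubst
  rw [← hsubst, ← integral_smul]
  refine setIntegral_congr_fun measurableSet_Ioi fun t (ht : 0 < t) ↦ ?_
  have harg : ((x ^ c * t : ℝ) : ℂ) * (x : ℂ) ^ (-c : ℂ) = t := by
    rw [ofReal_mul, ofReal_cpow hx.le, mul_right_comm, ← cpow_add _ _ hx', add_neg_cancel,
      cpow_zero, one_mul]
  have hden : ((x ^ c * t : ℝ) : ℂ) ^ s * (x : ℂ) ^ (c * (1 - s)) = (x ^ c : ℝ) * t ^ s := by
    rw [ofReal_mul, mul_cpow_ofReal_nonneg hxc.le ht.le, cpow_mul_ofReal_nonneg hx.le,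
      mul_right_comm, ← cpow_add _ _ hxc', add_sub_cancel, cpow_one]
  rw [harg, hden, Complex.real_smul, cpow_neg, mul_div_assoc', mul_div_mul_left _ _ hxc',
    div_eq_mul_inv, mul_assoc]

theorem integral_mittagLeffler_mul_log_cpow_eq (k : ℂ) {x : ℝ} (hx : 0 < x) :
    ∫ u in Ioi (0 : ℝ), cexp (-x) * mittagLeffler (1 / 4) (-u) *
        Complex.log (I * u * x ^ (-(1 / 4 : ℂ))) ^ k / (u ^ (1 / 2 : ℂ) * x ^ (1 / 8 : ℂ)) =
      ∫ t in Ioi (0 : ℝ), cexp (-x) *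
        mittagLeffler (1 / (4 : ℕ)) (-1 * (x ^ (1 / (4 : ℕ) : ℝ) * t : ℝ)) *
          (Complex.log (I * t) ^ k * t ^ (-(1 / 2) : ℂ)) := by
  have hsubst := integral_mul_comp_mul_cpow_div (fun u ↦ cexp (-x) * mittagLeffler (1 / 4) (-u))
    (fun z ↦ Complex.log (I * z) ^ k) (1 / 4) (1 / 2) hx
  have hquarter : ((1 / 4 : ℝ) : ℂ) = 1 / 4 := by norm_num
  have heighth : (1 / 4 * (1 - 1 / 2) : ℂ) = 1 / 8 := by norm_num
  simpa only [hquarter, heighth, mul_assoc, neg_one_mul, Nat.cast_ofNat] using hsubst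

theorem double_integral_mittagLeffler_HurwitzZeta.hurwitzZeta (k : ℂ) :
    (∫ x in Ioi (0 : ℝ), ∫ u in Ioi (0 : ℝ),
        Complex.exp (-(x : ℂ)) * mittagLeffler (1 / 4) (-(u : ℂ)) *
          Complex.log (I * u * (x : ℂ) ^ (-(1 / 4 : ℂ))) ^ k /
            ((u : ℂ) ^ (1 / 2 : ℂ) * (x : ℂ) ^ (1 / 8 : ℂ)))
      = I ^ k * 2 ^ (2 * k + 1) * (π : ℂ) ^ (k + 1) *
          (HurwitzZeta.hurwitzZeta ((3 / 8 : ℝ) : UnitAddCircle) (-k) -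
            HurwitzZeta.hurwitzZeta ((7 / 8 : ℝ) : UnitAddCircle) (-k)) := by
  have hg : EqOn (fun t : ℝ ↦ Complex.log (I * t) ^ k * (t : ℂ) ^ (-(1 / 2) : ℂ) / (1 + t))
      (fun t ↦ Complex.log (I * t) ^ k * ((t ^ ((1 / 2 : ℝ) - 1) / (1 + t) : ℝ) : ℂ))
      (Ioi 0) := by
    intro t (ht : 0 < t)
    norm_num [ofReal_cpow ht.le, mul_div_assoc]
  have hint := (integrableOn_log_I_mul_cpow (a := 1 / 2) (by norm_num) (by norm_num) k).congr_fun
    hg.symm measurableSet_Ioi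
  rw [← logBetaIntegral_half, logBetaIntegral, ← setIntegral_congr_fun measurableSet_Ioi hg,
    setIntegral_congr_fun measurableSet_Ioi
      fun x hx ↦ integral_mittagLeffler_mul_log_cpow_eq k hx,
    integral_integral_cexp_neg_mul_mittagLeffler_mul four_ne_zero (by norm_num) (by norm_num) hint]
  simp only [neg_one_mul, sub_neg_eq_add]
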